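/- arXiv:1103.0937 — 7 statements merged into one kernel-verified Lean document; each statement's English description precedes it below -/
import Mathlib

section
/- For every real θ > 0 and every smooth function f : (0,∞) → ℂ, the conjugated operator satisfies, for all u > 0, U_θ( −(d²/du²)(U_θ^{-1} f) )(u) = a_2(θ,u) f''(u) + a_1(θ,u) f'(u) + a_0(θ,u) f(u); that is, U_θ ∘ (−d²/du²) ∘ U_θ^{-1} = a_2(θ,·) ∂²_u + a_1(θ,·) ∂_u + a_0(θ,·) on smooth functions. -/
open Set MeasureTheory

lemma aux_comp (f : ℝ → ℂ) (b α : ℝ → ℝ) (f' : ℂ) (b' c w v : ℝ) (hw : α v = w)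
    (hf : HasDerivAt f f' w) (hb : HasDerivAt b b' w) (hα : HasDerivAt α c v) :
    HasDerivAt (fun x => f (α x) * ((b (α x) : ℝ) : ℂ))
      (((c : ℝ) : ℂ) * (f' * ((b w : ℝ) : ℂ) + f w * ((b' : ℝ) : ℂ))) v := by
  subst hw
  have h1 : HasDerivAt (fun x => f x * ((b x : ℝ) : ℂ)) _ (α v) := hf.mul hb.ofReal_comp
  have h2 := h1.scomp v hα
  simpa [Function.comp_def, mul_add] using h2

/-- For real `θ > 0` and smooth `f : (0,∞) → ℂ`, the conjugated
operator satisfies `U_θ(−(d²/du²)(U_θ⁻¹ f))(u) = a₂(θ,u) f''(u) + a₁(θ,u) f'(u) + a₀(θ,u) f(u)`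
for all `u > 0`, where `(U_θ g)(u) = g(ψ_θ(u))·ψ_θ'(u)^{1/2}` and
`(U_θ⁻¹ f)(u) = f(α_θ(u))·ψ_θ'(α_θ(u))^{-1/2}`, with
`a₂ = −1/ψ_θ'(u)²`, `a₁ = 2ψ_θ''(u)/ψ_θ'(u)³`,
`a₀ = (1/2)ψ_θ'''(u)/ψ_θ'(u)³ − (5/4)ψ_θ''(u)²/ψ_θ'(u)⁴`. -/
theorem stmt_2
    (K R : ℝ) (hK : 2 < K) (hKR : K < R)
    (φ : ℝ → ℝ) (hφ : ContDiff ℝ (⊤ : ℕ∞) φ)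
    (hφ0 : ∀ u, 0 ≤ φ u) (hφ1 : ∀ u, φ u ≤ 1)
    (hφ' : ∀ u, 0 ≤ deriv φ u)
    (hφK : ∀ u, u < K → φ u = 0)
    (hφR : ∀ u, R < u → φ u = 1)
    (θ : ℝ) (hθ : 0 < θ)
    (ψ α : ℝ → ℝ)
    (hψ : ∀ u, ψ u = (φ u * θ + 1) * u)
    (hbij : BijOn ψ (Ici (0 : ℝ)) (Ici (0 : ℝ)))
    (hα : InvOn α ψ (Ici (0 : ℝ)) (Ici (0 : ℝ)))
    (f : ℝ → ℂ) (hf : ContDiffOn ℝ (⊤ : ℕ∞) f (Ioi 0)) :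
    ∀ u : ℝ, 0 < u →
      (-(deriv (deriv (fun v : ℝ =>
          f (α v) * (((Real.sqrt (deriv ψ (α v)))⁻¹ : ℝ) : ℂ))) (ψ u)))
        * ((Real.sqrt (deriv ψ u) : ℝ) : ℂ)
      = ((-(1 / (deriv ψ u) ^ 2) : ℝ) : ℂ) * deriv (deriv f) u
        + ((2 * deriv (deriv ψ) u / (deriv ψ u) ^ 3 : ℝ) : ℂ) * deriv f u
        + (((1 / 2) * deriv (deriv (deriv ψ)) u / (deriv ψ u) ^ 3
            - (5 / 4) * (deriv (deriv ψ) u) ^ 2 / (deriv ψ u) ^ 4 : ℝ) : ℂ) * f u := by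
  have hψe : ψ = fun u => (φ u * θ + 1) * u := funext hψ
  have hψs : ContDiff ℝ (⊤ : ℕ∞) ψ := by
    rw [hψe]; fun_prop
  have hp : ContDiff ℝ (⊤ : ℕ∞) (deriv ψ) := (contDiff_infty_iff_deriv.1 hψs).2
  have hq : ContDiff ℝ (⊤ : ℕ∞) (deriv (deriv ψ)) := (contDiff_infty_iff_deriv.1 hp).2
  have dψ : ∀ x, HasDerivAt ψ (deriv ψ x) x := fun x =>
    ((contDiff_infty_iff_deriv.1 hψs).1 x).hasDerivAt
  have dp : ∀ x, HasDerivAt (deriv ψ) (deriv (deriv ψ) x) x := fun x =>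
    ((contDiff_infty_iff_deriv.1 hp).1 x).hasDerivAt
  have dq : ∀ x, HasDerivAt (deriv (deriv ψ)) (deriv (deriv (deriv ψ)) x) x := fun x =>
    ((contDiff_infty_iff_deriv.1 hq).1 x).hasDerivAt
  have ppos : ∀ x, 0 < x → 0 < deriv ψ x := by
    intro x hx
    have h1 : HasDerivAt φ (deriv φ x) x :=
      ((contDiff_infty_iff_deriv.1 hφ).1 x).hasDerivAt
    have h2 : HasDerivAt (fun u => (φ u * θ + 1) * u) _ x :=
      ((h1.mul_const θ).add_const 1).mul (hasDerivAt_id x)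
    rw [hψe, h2.deriv]
    have := hφ' x
    have := hφ0 x
    try simp only [id]
    positivity
  have hf' : ContDiffOn ℝ (⊤ : ℕ∞) (deriv f) (Ioi 0) :=
    ((contDiffOn_infty_iff_deriv_of_isOpen isOpen_Ioi).1 hf).2
  have df : ∀ x, 0 < x → HasDerivAt f (deriv f x) x := fun x hx =>
    (((contDiffOn_infty_iff_deriv_of_isOpen isOpen_Ioi).1 hf).1.differentiableAt
      (Ioi_mem_nhds hx)).hasDerivAt
  have df' : ∀ x, 0 < x → HasDerivAt (deriv f) (deriv (deriv f) x) x := fun x hx =>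
    (((contDiffOn_infty_iff_deriv_of_isOpen isOpen_Ioi).1 hf').1.differentiableAt
      (Ioi_mem_nhds hx)).hasDerivAt
  have dα : ∀ w, 0 < w → HasDerivAt α (deriv ψ w)⁻¹ (ψ w) := by
    intro w hw
    have h1 : HasStrictDerivAt ψ (deriv ψ w) w :=
      hψs.contDiffAt.hasStrictDerivAt (by simp)
    refine (h1.to_local_left_inverse (ppos w hw).ne' ?_).hasDerivAt
    filter_upwards [Ioi_mem_nhds hw] with x hx
    exact hα.1 (mem_Ici.2 (le_of_lt (mem_Ioi.1 hx)))
  have αψ : ∀ w, 0 < w → α (ψ w) = w := fun w hw => hα.1 hw.le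
  have ds : ∀ x, 0 < x → HasDerivAt (fun x => (Real.sqrt (deriv ψ x))⁻¹)
      (-(1/2) * (Real.sqrt (deriv ψ x))⁻¹ * deriv (deriv ψ) x / deriv ψ x) x := by
    intro x hx
    have hpx := ppos x hx
    have hs : 0 < Real.sqrt (deriv ψ x) := Real.sqrt_pos.2 hpx
    have h := ((dp x).sqrt hpx.ne').inv hs.ne'
    refine h.congr_deriv ?_
    rw [Real.sq_sqrt hpx.le]
    field_simp
  intro u hu
  have hev : deriv (fun v : ℝ => f (α v) * (((Real.sqrt (deriv ψ (α v)))⁻¹ : ℝ) : ℂ))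
      =ᶠ[nhds (ψ u)] fun v =>
        deriv f (α v) * (((Real.sqrt (deriv ψ (α v)))⁻¹ / deriv ψ (α v) : ℝ) : ℂ)
        + f (α v) * ((-(1/2) * (Real.sqrt (deriv ψ (α v)))⁻¹ * deriv (deriv ψ) (α v)
            / deriv ψ (α v) / deriv ψ (α v) : ℝ) : ℂ) := by
    have hψu : 0 < ψ u := by
      rw [hψ]
      have := hφ0 u
      positivity
    have hc := (dα u hu).continuousAt
    have h1 : ∀ᶠ v in nhds (ψ u), 0 < α v :=
      hc.eventually (Ioi_mem_nhds (by rw [αψ u hu]; exact hu))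
    filter_upwards [h1, Ioi_mem_nhds hψu] with v hv hv0
    have hv2 : ψ (α v) = v := hα.2 (mem_Ici.2 (le_of_lt (mem_Ioi.1 hv0)))
    have h := aux_comp f (fun x => (Real.sqrt (deriv ψ x))⁻¹) α _ _ _ (α v) v rfl
      (df _ hv) (ds _ hv) (hv2 ▸ dα _ hv)
    rw [h.deriv]
    push_cast
    ring
  rw [hev.deriv_eq]
  have hpu := ppos u hu
  have hs : 0 < Real.sqrt (deriv ψ u) := Real.sqrt_pos.2 hpu
  have hA := aux_comp (deriv f) (fun x => (Real.sqrt (deriv ψ x))⁻¹ / deriv ψ x) α _ _ _ u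
    (ψ u) (αψ u hu) (df' u hu) ((ds u hu).div (dp u) hpu.ne') (dα u hu)
  have hB := aux_comp f (fun x => -(1/2) * (Real.sqrt (deriv ψ x))⁻¹ * deriv (deriv ψ) x
      / deriv ψ x / deriv ψ x) α _ _ _ u
    (ψ u) (αψ u hu) (df u hu)
    (((((ds u hu).const_mul (-(1/2))).mul (dq u)).div (dp u) hpu.ne').div (dp u) hpu.ne')
    (dα u hu)
  have hAB := (hA.add hB).deriv
  refine (congrArg (fun z => -z * ((Real.sqrt (deriv ψ u) : ℝ) : ℂ)) hAB).trans ?_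
  have hpc : ((deriv ψ u : ℝ) : ℂ) ≠ 0 := by exact_mod_cast hpu.ne'
  have hsc : ((Real.sqrt (deriv ψ u) : ℝ) : ℂ) ≠ 0 := by exact_mod_cast hs.ne'
  simp only [Pi.mul_apply, Pi.div_apply]
  push_cast
  generalize ((Real.sqrt (deriv ψ u) : ℝ) : ℂ) = s at *
  generalize ((deriv ψ u : ℝ) : ℂ) = p at *
  field_simp
  ring
end

section
/- For every θ ∈ Γ there exists a constant C₀ > 0 such that −Re(a_2(θ,u)) ≥ C₀ for all u ≥ 0. In particular, writing B(u) := φ'(u)u + φ(u) ≥ 0 and θ = θ₀ + iθ₁, one has Re(ψ_θ'(u)²) = (B(u)θ₀ + 1)² − B(u)²θ₁² ≥ 1 for all u ≥ 0 when θ ∈ Γ. -/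
open Set

/-- For every `θ ∈ Γ` there exists `C₀ > 0` with
`−Re(a₂(θ,u)) ≥ C₀` for all `u ≥ 0`. Moreover, writing `B(u) = φ'(u)u + φ(u) ≥ 0`
and `θ = θ₀ + iθ₁`, one has `Re(ψ_θ'(u)²) = (B(u)θ₀+1)² − B(u)²θ₁² ≥ 1`
for all `u ≥ 0` when `θ ∈ Γ`. -/
theorem stmt_5
    (K R : ℝ) (hK : 2 < K) (hKR : K < R)
    (φ : ℝ → ℝ) (hφ : ContDiff ℝ (⊤ : ℕ∞) φ)
    (hφ0 : ∀ u, 0 ≤ φ u) (hφ1 : ∀ u, φ u ≤ 1)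
    (hφ' : ∀ u, 0 ≤ deriv φ u)
    (hφK : ∀ u, u < K → φ u = 0)
    (hφR : ∀ u, R < u → φ u = 1)
    (ψ' : ℂ → ℝ → ℂ)
    (hψ' : ∀ θ u, ψ' θ u = ((deriv φ u * u : ℝ) : ℂ) * θ + ((φ u : ℝ) : ℂ) * θ + 1)
    (a₂ : ℂ → ℝ → ℂ)
    (ha₂ : ∀ θ u, a₂ θ u = -(1 / (ψ' θ u) ^ 2))
    (θ : ℂ) (hθre : 0 < θ.re) (hθim : |θ.im| ≤ θ.re) (hθim2 : θ.im ^ 2 < 1 / 2) :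
    (∃ C₀ : ℝ, 0 < C₀ ∧ ∀ u : ℝ, 0 ≤ u → C₀ ≤ -(a₂ θ u).re) ∧
    (∀ u : ℝ, 0 ≤ u →
      0 ≤ deriv φ u * u + φ u ∧
      ((ψ' θ u) ^ 2).re
        = ((deriv φ u * u + φ u) * θ.re + 1) ^ 2 - (deriv φ u * u + φ u) ^ 2 * θ.im ^ 2 ∧
      1 ≤ ((ψ' θ u) ^ 2).re) := by
  have hxy : θ.im ^ 2 ≤ θ.re ^ 2 := by
    rw [← sq_abs θ.im]
    exact pow_le_pow_left₀ (abs_nonneg _) hθim 2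
  have hre : ∀ u, (ψ' θ u).re = (deriv φ u * u + φ u) * θ.re + 1 := by
    intro u
    rw [hψ']
    simp only [Complex.add_re, Complex.re_ofReal_mul, Complex.one_re]
    ring
  have him : ∀ u, (ψ' θ u).im = (deriv φ u * u + φ u) * θ.im := by
    intro u
    rw [hψ']
    simp only [Complex.add_im, Complex.im_ofReal_mul, Complex.one_im]
    ring
  have hB : ∀ u : ℝ, 0 ≤ u → 0 ≤ deriv φ u * u + φ u := fun u hu =>
    add_nonneg (mul_nonneg (hφ' u) hu) (hφ0 u)
  have hsq : ∀ u, ((ψ' θ u) ^ 2).re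
      = ((deriv φ u * u + φ u) * θ.re + 1) ^ 2
        - (deriv φ u * u + φ u) ^ 2 * θ.im ^ 2 := by
    intro u
    rw [sq (ψ' θ u), Complex.mul_re, hre, him]
    ring
  have hone : ∀ u : ℝ, 0 ≤ u → 1 ≤ ((ψ' θ u) ^ 2).re := by
    intro u hu
    rw [hsq]
    have h1 := mul_le_mul_of_nonneg_left hxy (sq_nonneg (deriv φ u * u + φ u))
    have h2 := mul_nonneg (hB u hu) hθre.le
    nlinarith
  refine ⟨?_, fun u hu => ⟨hB u hu, hsq u, hone u hu⟩⟩
  have hcont : Continuous (fun u => deriv φ u * u + φ u) :=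
    ((hφ.continuous_deriv (by norm_cast)).mul continuous_id).add hφ.continuous
  obtain ⟨M₀, hM₀⟩ := (isCompact_Icc (a := (0 : ℝ)) (b := R)).bddAbove_image hcont.continuousOn
  have hM : ∀ u : ℝ, 0 ≤ u → deriv φ u * u + φ u ≤ max M₀ 1 := by
    intro u hu
    rcases le_or_gt u R with h | h
    · exact le_trans (hM₀ ⟨u, ⟨hu, h⟩, rfl⟩) (le_max_left _ _)
    · have hd : deriv φ u = 0 := by
        have : φ =ᶠ[nhds u] fun _ => (1 : ℝ) := by
          filter_upwards [Ioi_mem_nhds h] with v hv using hφR v hv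
        rw [this.deriv_eq]
        simp
      rw [hd, hφR u h]
      simp
  generalize max M₀ 1 = M at hM
  have hM0 : 0 ≤ M := le_trans (hB 0 le_rfl) (hM 0 le_rfl)
  have hN : 0 < 2 * (M * θ.re + 1) ^ 2 := by positivity
  refine ⟨1 / (2 * (M * θ.re + 1) ^ 2) ^ 2, by positivity, fun u hu => ?_⟩
  have hn : Complex.normSq (ψ' θ u) ≤ 2 * (M * θ.re + 1) ^ 2 := by
    rw [Complex.normSq_apply, hre, him]
    have h1 := mul_le_mul_of_nonneg_left hxy (sq_nonneg (deriv φ u * u + φ u))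
    have h2 := mul_nonneg (hB u hu) hθre.le
    have h3 := mul_le_mul_of_nonneg_right (hM u hu) hθre.le
    nlinarith
  have h1 := hone u hu
  have hpos : 0 < Complex.normSq (ψ' θ u) := by
    rw [Complex.normSq_pos]
    intro h0
    rw [h0] at h1
    norm_num at h1
  rw [ha₂, Complex.neg_re, neg_neg, one_div (ψ' θ u ^ 2), Complex.inv_re, map_pow]
  gcongr
end

section
/- For every θ ∈ Γ there exists a constant k > 0 such that Re(ψ_θ'(u)²) − k·|Im(ψ_θ'(u)²)| ≥ 0 for all u ≥ 0. -/
open Set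

/-- For every `θ ∈ Γ` there exists `k > 0` such that
`Re(ψ_θ'(u)²) − k·|Im(ψ_θ'(u)²)| ≥ 0` for all `u ≥ 0`. -/
theorem stmt_6
    (K R : ℝ) (hK : 2 < K) (hKR : K < R)
    (φ : ℝ → ℝ) (hφ : ContDiff ℝ (⊤ : ℕ∞) φ)
    (hφ0 : ∀ u, 0 ≤ φ u) (hφ1 : ∀ u, φ u ≤ 1)
    (hφ' : ∀ u, 0 ≤ deriv φ u)
    (hφK : ∀ u, u < K → φ u = 0)
    (hφR : ∀ u, R < u → φ u = 1)
    (ψ' : ℂ → ℝ → ℂ)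
    (hψ' : ∀ θ u, ψ' θ u = ((deriv φ u * u : ℝ) : ℂ) * θ + ((φ u : ℝ) : ℂ) * θ + 1)
    (θ : ℂ) (hθre : 0 < θ.re) (hθim : |θ.im| ≤ θ.re) (hθim2 : θ.im ^ 2 < 1 / 2) :
    ∃ k : ℝ, 0 < k ∧ ∀ u : ℝ, 0 ≤ u →
      0 ≤ ((ψ' θ u) ^ 2).re - k * |((ψ' θ u) ^ 2).im| := by
  have hc : Continuous (fun u => deriv φ u * u) :=
    (hφ.continuous_deriv (by simp)).mul continuous_id
  obtain ⟨C, hC⟩ := (isCompact_Icc (a := (0 : ℝ)) (b := R)).exists_bound_of_continuousOn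
    hc.continuousOn
  have hC0 : 0 ≤ C := le_trans (norm_nonneg _) (hC 0 ⟨le_rfl, by linarith⟩)
  have hb : ∀ u : ℝ, 0 ≤ u → deriv φ u * u ≤ C := by
    intro u hu
    rcases le_or_gt u R with h | h
    · exact le_trans (le_abs_self _) (hC u ⟨hu, h⟩)
    · have he : φ =ᶠ[nhds u] fun _ => (1 : ℝ) := by
        filter_upwards [Ioi_mem_nhds h] with v hv using hφR v hv
      rw [he.deriv_eq]
      simpa using hC0
  have hD : 0 < 2 * (1 + (C + 1) * θ.re) := by positivity
  refine ⟨1 / (2 * (1 + (C + 1) * θ.re)), by positivity, ?_⟩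
  intro u hu
  obtain ⟨a, ha⟩ : ∃ a, a = deriv φ u * u + φ u := ⟨_, rfl⟩
  have ha0 : 0 ≤ a := by
    rw [ha]; exact add_nonneg (mul_nonneg (hφ' u) hu) (hφ0 u)
  have haC : a ≤ C + 1 := by
    rw [ha]; exact add_le_add (hb u hu) (hφ1 u)
  have e : ψ' θ u = (a : ℂ) * θ + 1 := by
    rw [hψ', ha]; push_cast; ring
  have hre : ((ψ' θ u) ^ 2).re = (1 + a * θ.re) ^ 2 - a ^ 2 * θ.im ^ 2 := by
    rw [e, pow_two]; simp; ring
  have him : ((ψ' θ u) ^ 2).im = (2 * (1 + a * θ.re) * a) * θ.im := by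
    rw [e, pow_two]; simp; ring
  have hp : 0 ≤ a * θ.re := mul_nonneg ha0 hθre.le
  have hq : 0 ≤ 2 * (1 + a * θ.re) * a := by positivity
  rw [hre, him, abs_mul, abs_of_nonneg hq, sub_nonneg, one_div, inv_mul_le_iff₀ hD]
  have h1 : 2 * (1 + a * θ.re) ≤ 2 * (1 + (C + 1) * θ.re) := by gcongr
  have h2 : θ.im ^ 2 ≤ θ.re ^ 2 := sq_le_sq' (abs_le.1 hθim).1 (abs_le.1 hθim).2
  have h3 : a ^ 2 * θ.im ^ 2 ≤ a ^ 2 * θ.re ^ 2 := by gcongr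
  calc 2 * (1 + a * θ.re) * a * |θ.im| ≤ 2 * (1 + a * θ.re) * a * θ.re := by gcongr
    _ = 2 * (1 + a * θ.re) * (a * θ.re) := by ring
    _ ≤ 2 * (1 + (C + 1) * θ.re) * (a * θ.re) := by gcongr
    _ ≤ _ := by
      apply mul_le_mul_of_nonneg_left _ hD.le
      nlinarith
end

section
/- For every θ ∈ Γ there exist γ ∈ ℝ and k > 0 such that for all f ∈ C_c^∞((0,∞),ℂ): Re(q_θ(f)) + γ·‖f‖²_{L²((0,∞))} ≥ k·|Im(q_θ(f))|, where q_θ(f) := ∫₀^∞ ( a_2(θ,u) f''(u) + a_1(θ,u) f'(u) + a_0(θ,u) f(u) )·conj(f(u)) du is the quadratic form of the dilated Laplacian; that is, the form f ↦ q_θ(f) + γ⟨f,f⟩ is sectorial. -/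
open Set MeasureTheory

/-- Pointwise sectoriality of `P⁻²` for `P = 1 + sθ`. -/
lemma aux_sector (θ : ℂ) (h0 : 0 < θ.re) (h1 : |θ.im| ≤ θ.re) (S s : ℝ) (hs : 0 ≤ s)
    (hS : s ≤ S) (P : ℂ) (hP : P = (s : ℂ) * θ + 1) :
    1 / (2 * S * θ.re + 1) * |(1 / P ^ 2).im| ≤ (1 / P ^ 2).re := by
  have hre : (P ^ 2).re = (1 + s * θ.re) ^ 2 - (s * θ.im) ^ 2 := by
    rw [hP, pow_two]; simp [Complex.mul_re]; ring
  have him : (P ^ 2).im = 2 * (1 + s * θ.re) * (s * θ.im) := by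
    rw [hP, pow_two]; simp [Complex.mul_im]; ring
  have hsa : 0 ≤ s * θ.re := by positivity
  have hSa : s * θ.re ≤ S * θ.re := by gcongr
  have hsb : |s * θ.im| ≤ s * θ.re := by
    rw [abs_mul, abs_of_nonneg hs]; gcongr
  have hD : 0 < 2 * S * θ.re + 1 := by nlinarith
  have hsq : (s * θ.im) ^ 2 ≤ (s * θ.re) ^ 2 := sq_le_sq' (by linarith [(abs_le.1 hsb).1])
    (abs_le.1 hsb).2
  have key : |(P ^ 2).im| ≤ (2 * S * θ.re + 1) * (P ^ 2).re := by
    rw [hre, him, abs_mul, abs_of_nonneg (by positivity : 0 ≤ 2 * (1 + s * θ.re))]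
    have e1 : 2 * (1 + s * θ.re) * |s * θ.im| ≤ 2 * (1 + s * θ.re) * (S * θ.re) := by
      gcongr; linarith
    have e2 : 1 + 2 * (s * θ.re) ≤ (1 + s * θ.re) ^ 2 - (s * θ.im) ^ 2 := by nlinarith
    have e3 := mul_le_mul_of_nonneg_left e2 hD.le
    nlinarith [mul_nonneg hsa (hsa.trans hSa)]
  rw [one_div (P ^ 2), Complex.inv_re, Complex.inv_im, abs_div, abs_neg,
    abs_of_nonneg (Complex.normSq_nonneg _), ← mul_div_assoc]
  apply div_le_div_of_nonneg_right _ (Complex.normSq_nonneg _)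
  rw [one_div, inv_mul_le_iff₀ hD]
  exact key

/-- For every `θ ∈ Γ` there exist `γ ∈ ℝ` and `k > 0` such that for
all `f ∈ C_c^∞((0,∞),ℂ)`: `Re(q_θ(f)) + γ‖f‖² ≥ k·|Im(q_θ(f))|`, where
`q_θ(f) = ∫₀^∞ (a₂(θ,u)f''(u) + a₁(θ,u)f'(u) + a₀(θ,u)f(u))·conj(f(u)) du`;
that is, the form `f ↦ q_θ(f) + γ⟨f,f⟩` is sectorial. -/
theorem stmt_9
    (K R : ℝ) (hK : 2 < K) (hKR : K < R)
    (φ : ℝ → ℝ) (hφ : ContDiff ℝ (⊤ : ℕ∞) φ)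
    (hφ0 : ∀ u, 0 ≤ φ u) (hφ1 : ∀ u, φ u ≤ 1)
    (hφ' : ∀ u, 0 ≤ deriv φ u)
    (hφK : ∀ u, u < K → φ u = 0)
    (hφR : ∀ u, R < u → φ u = 1)
    (ψ' ψ'' ψ''' : ℂ → ℝ → ℂ)
    (hψ' : ∀ θ u, ψ' θ u = ((deriv φ u * u : ℝ) : ℂ) * θ + ((φ u : ℝ) : ℂ) * θ + 1)
    (hψ'' : ∀ θ u, ψ'' θ u
      = ((deriv (deriv φ) u * u : ℝ) : ℂ) * θ + 2 * ((deriv φ u : ℝ) : ℂ) * θ)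
    (hψ''' : ∀ θ u, ψ''' θ u
      = ((deriv (deriv (deriv φ)) u * u : ℝ) : ℂ) * θ + 3 * ((deriv (deriv φ) u : ℝ) : ℂ) * θ)
    (a₂ a₁ a₀ : ℂ → ℝ → ℂ)
    (ha₂ : ∀ θ u, a₂ θ u = -(1 / (ψ' θ u) ^ 2))
    (ha₁ : ∀ θ u, a₁ θ u = 2 * ψ'' θ u / (ψ' θ u) ^ 3)
    (ha₀ : ∀ θ u, a₀ θ u = (1 / 2) * ψ''' θ u / (ψ' θ u) ^ 3
      - (5 / 4) * (ψ'' θ u) ^ 2 / (ψ' θ u) ^ 4)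
    (θ : ℂ) (hθre : 0 < θ.re) (hθim : |θ.im| ≤ θ.re) (hθim2 : θ.im ^ 2 < 1 / 2) :
    ∃ γ : ℝ, ∃ k : ℝ, 0 < k ∧
      ∀ f : ℝ → ℂ, ContDiff ℝ (⊤ : ℕ∞) f → HasCompactSupport f → tsupport f ⊆ Ioi 0 →
        k * |(∫ u in Ioi (0 : ℝ),
                (a₂ θ u * deriv (deriv f) u + a₁ θ u * deriv f u + a₀ θ u * f u)
                  * (starRingEnd ℂ) (f u)).im|
          ≤ (∫ u in Ioi (0 : ℝ),
                (a₂ θ u * deriv (deriv f) u + a₁ θ u * deriv f u + a₀ θ u * f u)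
                  * (starRingEnd ℂ) (f u)).re
            + γ * ∫ u in Ioi (0 : ℝ), ‖f u‖ ^ 2 := by
  have hφc : Continuous φ := hφ.continuous
  have hφ1s : ContDiff ℝ (⊤ : ℕ∞) (deriv φ) := ((contDiff_infty_iff_deriv).1 hφ).2
  have hφ2s : ContDiff ℝ (⊤ : ℕ∞) (deriv (deriv φ)) := ((contDiff_infty_iff_deriv).1 hφ1s).2
  have hφ3s : ContDiff ℝ (⊤ : ℕ∞) (deriv (deriv (deriv φ))) :=
    ((contDiff_infty_iff_deriv).1 hφ2s).2
  have c1 := hφ1s.continuous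
  have c2 := hφ2s.continuous
  have c3 := hφ3s.continuous
  -- vanishing of derivatives outside `[K, R]`
  have dz : ∀ (g : ℝ → ℝ) (c : ℝ) (U : Set ℝ), IsOpen U → (∀ u ∈ U, g u = c) →
      ∀ u ∈ U, deriv g u = 0 := by
    intro g c U hU hg u hu
    have : g =ᶠ[nhds u] fun _ => c := Filter.eventually_of_mem (hU.mem_nhds hu) hg
    rw [this.deriv_eq]; simp
  have z1K := dz φ 0 (Iio K) isOpen_Iio (fun u hu => hφK u hu)
  have z2K := dz _ 0 (Iio K) isOpen_Iio z1K
  have z3K := dz _ 0 (Iio K) isOpen_Iio z2K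
  have z1R := dz φ 1 (Ioi R) isOpen_Ioi (fun u hu => hφR u hu)
  have z2R := dz _ 0 (Ioi R) isOpen_Ioi z1R
  have z3R := dz _ 0 (Ioi R) isOpen_Ioi z2R
  set s : ℝ → ℝ := fun u => deriv φ u * u + φ u with hsdef
  have hsc : Continuous s := by fun_prop
  have hPs : ∀ u, ψ' θ u = (s u : ℂ) * θ + 1 := by
    intro u; rw [hψ']; simp only [hsdef]; push_cast; ring
  have hs0 : ∀ u, 0 ≤ s u := by
    intro u
    rcases lt_or_ge u K with h | h
    · simp [hsdef, z1K u h, hφK u h]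
    · have : 0 ≤ u := by linarith
      have := mul_nonneg (hφ' u) this
      have := hφ0 u
      simp only [hsdef]; linarith
  obtain ⟨S, hS⟩ : ∃ S, ∀ u, s u ≤ S := by
    obtain ⟨C, hC⟩ := isCompact_Icc.exists_bound_of_continuousOn (s := Icc K R) hsc.continuousOn
    refine ⟨max C 1, fun u => ?_⟩
    rcases lt_or_ge u K with h | h
    · simp [hsdef, z1K u h, hφK u h]
    · rcases lt_or_ge R u with h' | h'
      · simp [hsdef, z1R u h', hφR u h']
      · exact ((le_abs_self _).trans (hC u ⟨h, h'⟩)).trans (le_max_left _ _)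
  have hPne : ∀ u, ψ' θ u ≠ 0 := by
    intro u h
    have h2 := congrArg Complex.re h
    rw [hPs] at h2
    simp only [Complex.add_re, Complex.re_ofReal_mul, Complex.one_re, Complex.zero_re] at h2
    have := mul_nonneg (hs0 u) hθre.le
    linarith
  have hPc : Continuous (ψ' θ) := by
    rw [show ψ' θ = fun u => (s u : ℂ) * θ + 1 from funext hPs]; fun_prop
  have hQc : Continuous (ψ'' θ) := by
    rw [show ψ'' θ = _ from funext (hψ'' θ)]; fun_prop
  have hTc : Continuous (ψ''' θ) := by
    rw [show ψ''' θ = _ from funext (hψ''' θ)]; fun_prop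
  have ha2c : Continuous (a₂ θ) := by
    rw [show a₂ θ = _ from funext (ha₂ θ)]
    exact (continuous_const.div (hPc.pow 2) (fun u => pow_ne_zero _ (hPne u))).neg
  have ha1c : Continuous (a₁ θ) := by
    rw [show a₁ θ = _ from funext (ha₁ θ)]
    exact (continuous_const.mul hQc).div (hPc.pow 3) (fun u => pow_ne_zero _ (hPne u))
  have ha0c : Continuous (a₀ θ) := by
    rw [show a₀ θ = _ from funext (ha₀ θ)]
    exact ((continuous_const.mul hTc).div (hPc.pow 3) (fun u => pow_ne_zero _ (hPne u))).sub
      ((continuous_const.mul (hQc.pow 2)).div (hPc.pow 4) (fun u => pow_ne_zero _ (hPne u)))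
  obtain ⟨M, hM⟩ : ∃ M, ∀ u, ‖a₀ θ u‖ ≤ M := by
    obtain ⟨C, hC⟩ := isCompact_Icc.exists_bound_of_continuousOn (s := Icc K R) ha0c.continuousOn
    refine ⟨max C 0, fun u => ?_⟩
    rcases lt_or_ge u K with h | h
    · simp [ha₀, hψ'', hψ''', z1K u h, z2K u h, z3K u h]
    · rcases lt_or_ge R u with h' | h'
      · simp [ha₀, hψ'', hψ''', z1R u h', z2R u h', z3R u h']
      · exact (hC u ⟨h, h'⟩).trans (le_max_left _ _)
  have hsd : ∀ u, HasDerivAt s (deriv (deriv φ) u * u + 2 * deriv φ u) u := by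
    intro u
    have d0 : HasDerivAt φ (deriv φ u) u := (hφ.differentiable (by simp) u).hasDerivAt
    have d1 : HasDerivAt (deriv φ) (deriv (deriv φ) u) u :=
      (hφ1s.differentiable (by simp) u).hasDerivAt
    exact ((d1.mul (hasDerivAt_id u)).add d0).congr_deriv (by simp; ring)
  have hPd : ∀ u, HasDerivAt (ψ' θ) (ψ'' θ u) u := by
    intro u
    rw [show ψ' θ = fun u => (s u : ℂ) * θ + 1 from funext hPs]
    exact (((hsd u).ofReal_comp.mul_const θ).add_const 1).congr_deriv (by
      rw [hψ'']; push_cast; ring)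
  have ha2d : ∀ u, HasDerivAt (a₂ θ) (a₁ θ u) u := by
    intro u
    rw [show a₂ θ = fun u => -((ψ' θ u) ^ 2)⁻¹ from funext fun u => by rw [ha₂, one_div]]
    refine ((((hPd u).pow 2).inv (pow_ne_zero _ (hPne u))).neg).congr_deriv ?_
    rw [ha₁]
    have := hPne u
    simp only [Pi.pow_apply]
    field_simp
    norm_num
    ring
  have hS0 : 0 ≤ S := (hs0 0).trans (hS 0)
  have hk : 0 < 1 / (2 * S * θ.re + 1) := by positivity
  set k := 1 / (2 * S * θ.re + 1) with hkdef
  refine ⟨(k + 1) * M, k, hk, ?_⟩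
  intro f hf hfc hft
  have hf1 : ContDiff ℝ (⊤ : ℕ∞) (deriv f) := ((contDiff_infty_iff_deriv).1 hf).2
  have hf2 : ContDiff ℝ (⊤ : ℕ∞) (deriv (deriv f)) := ((contDiff_infty_iff_deriv).1 hf1).2
  have f0 := hf.continuous
  have f1 := hf1.continuous
  have f2 := hf2.continuous
  have hfc1 : HasCompactSupport (deriv f) := hfc.deriv
  have hz : ∀ u, u ∉ Ioi (0 : ℝ) → f u = 0 := fun u hu =>
    image_eq_zero_of_notMem_tsupport (fun h => hu (hft h))
  have r1 : ∫ u in Ioi (0 : ℝ),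
      (a₂ θ u * deriv (deriv f) u + a₁ θ u * deriv f u + a₀ θ u * f u)
        * (starRingEnd ℂ) (f u) = ∫ u,
      (a₂ θ u * deriv (deriv f) u + a₁ θ u * deriv f u + a₀ θ u * f u)
        * (starRingEnd ℂ) (f u) :=
    setIntegral_eq_integral_of_forall_compl_eq_zero (fun u hu => by simp [hz u hu])
  have r2 : ∫ u in Ioi (0 : ℝ), ‖f u‖ ^ 2 = ∫ u, ‖f u‖ ^ 2 :=
    setIntegral_eq_integral_of_forall_compl_eq_zero (fun u hu => by simp [hz u hu])
  rw [r1, r2]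
  have hconj : HasCompactSupport (fun u => (starRingEnd ℂ) (f u)) :=
    hfc.comp_left (g := starRingEnd ℂ) (by simp)
  have hconj1 : HasCompactSupport (fun u => (starRingEnd ℂ) (deriv f u)) :=
    hfc1.comp_left (g := starRingEnd ℂ) (by simp)
  have cc : Continuous (fun u => (starRingEnd ℂ) (f u)) := Complex.continuous_conj.comp f0
  have cc1 : Continuous (fun u => (starRingEnd ℂ) (deriv f u)) := Complex.continuous_conj.comp f1
  -- the total derivative
  let G : ℝ → ℂ := fun u => a₂ θ u * deriv f u * (starRingEnd ℂ) (f u)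
  let G' : ℝ → ℂ := fun u => (a₁ θ u * deriv f u + a₂ θ u * deriv (deriv f) u)
    * (starRingEnd ℂ) (f u) + a₂ θ u * deriv f u * (starRingEnd ℂ) (deriv f u)
  let H : ℝ → ℂ := fun u => (-a₂ θ u) * deriv f u * (starRingEnd ℂ) (deriv f u)
    + a₀ θ u * f u * (starRingEnd ℂ) (f u)
  have hGd : ∀ u, HasDerivAt G (G' u) u := by
    intro u
    have e0 : HasDerivAt f (deriv f u) u := (hf.differentiable (by simp) u).hasDerivAt
    have e1 : HasDerivAt (deriv f) (deriv (deriv f) u) u :=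
      (hf1.differentiable (by simp) u).hasDerivAt
    have e2 : HasDerivAt (fun u => (starRingEnd ℂ) (f u)) ((starRingEnd ℂ) (deriv f u)) u :=
      e0.star
    exact ((ha2d u).mul e1).mul e2
  have hGi : Integrable G :=
    Continuous.integrable_of_hasCompactSupport ((ha2c.mul f1).mul cc) (hconj.mul_left)
  have hG'i : Integrable G' :=
    (Continuous.integrable_of_hasCompactSupport
      (((ha1c.mul f1).add (ha2c.mul f2)).mul cc) (hconj.mul_left)).add
    (Continuous.integrable_of_hasCompactSupport ((ha2c.mul f1).mul cc1) (hconj1.mul_left))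
  have hHi : Integrable H :=
    (Continuous.integrable_of_hasCompactSupport ((ha2c.neg.mul f1).mul cc1)
      (hconj1.mul_left)).add
    (Continuous.integrable_of_hasCompactSupport ((ha0c.mul f0).mul cc) (hconj.mul_left))
  have hG0 : ∫ u, G' u = 0 := integral_eq_zero_of_hasDerivAt_of_integrable hGd hG'i hGi
  have hq : ∫ u, (a₂ θ u * deriv (deriv f) u + a₁ θ u * deriv f u + a₀ θ u * f u)
        * (starRingEnd ℂ) (f u) = ∫ u, H u := by
    have : ∫ u, (G' u + H u) = ∫ u, H u := by
      rw [integral_add hG'i hHi, hG0, zero_add]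
    rw [← this]
    congr 1; funext u; simp only [G', H]; ring
  have hni : Integrable (fun u => ‖f u‖ ^ 2) := by
    refine Continuous.integrable_of_hasCompactSupport (by fun_prop) ?_
    exact hfc.comp_left (g := fun z : ℂ => ‖z‖ ^ 2) (by simp)
  rw [hq]
  have him : (∫ u, H u).im = ∫ u, (H u).im := (integral_im hHi).symm
  have hre : (∫ u, H u).re = ∫ u, (H u).re := (integral_re hHi).symm
  have hHim : Integrable (fun u => (H u).im) := hHi.im
  have hHre : Integrable (fun u => (H u).re) := hHi.re
  rw [him, hre, ← integral_const_mul, ← integral_add hHre (hni.const_mul _)]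
  calc k * |∫ u, (H u).im| ≤ k * ∫ u, |(H u).im| := by
        gcongr; exact abs_integral_le_integral_abs
    _ = ∫ u, k * |(H u).im| := (integral_const_mul _ _).symm
    _ ≤ _ := by
        apply integral_mono (hHim.abs.const_mul k) (hHre.add (hni.const_mul _))
        intro u
        have hsec := aux_sector θ hθre hθim S (s u) (hs0 u) (hS u) (ψ' θ u) (hPs u)
        rw [← hkdef] at hsec
        have hHu : H u = (1 / (ψ' θ u) ^ 2) * ((‖deriv f u‖ ^ 2 : ℝ) : ℂ)
            + a₀ θ u * ((‖f u‖ ^ 2 : ℝ) : ℂ) := by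
          simp only [H]
          rw [mul_assoc, mul_assoc, Complex.mul_conj, Complex.mul_conj, ha₂, neg_neg,
            Complex.normSq_eq_norm_sq, Complex.normSq_eq_norm_sq]
        have i1 := (Complex.abs_im_le_norm (a₀ θ u)).trans (hM u)
        have i2 := (Complex.abs_re_le_norm (a₀ θ u)).trans (hM u)
        have p1 : 0 ≤ ‖deriv f u‖ ^ 2 := by positivity
        have p2 : 0 ≤ ‖f u‖ ^ 2 := by positivity
        simp only [Pi.add_apply]
        rw [hHu]
        generalize ‖deriv f u‖ ^ 2 = x at p1 ⊢
        generalize ‖f u‖ ^ 2 = y at p2 ⊢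
        generalize 1 / (ψ' θ u) ^ 2 = w at hsec ⊢
        rw [Complex.add_im, Complex.add_re, Complex.im_mul_ofReal, Complex.im_mul_ofReal,
          Complex.re_mul_ofReal, Complex.re_mul_ofReal]
        have t1 : |w.im * x + (a₀ θ u).im * y| ≤ |w.im| * x + M * y := by
          refine (abs_add_le _ _).trans ?_
          rw [abs_mul, abs_mul, abs_of_nonneg p1, abs_of_nonneg p2]
          gcongr
        have t2 := mul_le_mul_of_nonneg_left t1 hk.le
        have t3 := mul_le_mul_of_nonneg_right hsec p1
        have t4 := mul_le_mul_of_nonneg_right (abs_le.1 i2).1 p2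
        linarith
end

section
/- Let θ' ∈ ℂ and μ, λ ∈ ℂ. Let (p_n) and (q_n) be sequences in C_c^∞((0,∞),ℂ) such that ‖p_n‖_{L²} = ‖q_n‖_{L²} = 1, for every T > 0 there exists N such that for all n > N the supports of p_n and of q_n are disjoint from (0,T], ‖θ'·p_n''‖_{L²((0,∞))} → 0, and ‖−θ'·q_n'' + (μ−λ)·q_n‖_{L²((0,∞))} → 0. Define g_n(u₁,u₂) := p_n(u₁)·q_n(u₂). Then ‖g_n‖_{L²((0,∞)²)} = 1, for every T > 0 the support of g_n is eventually disjoint from [0,T]×(0,∞), and ‖−θ'·∂²_{u₁}g_n − θ'·∂²_{u₂}g_n + (μ−λ)·g_n‖_{L²((0,∞)²)} → 0. -/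
open Set MeasureTheory Filter

theorem aux_eLpNorm_prod (f h : ℝ → ℂ) (hf : Continuous f) (hh : Continuous h) (m k : Measure ℝ)
    [SFinite m] [SFinite k] :
    eLpNorm (fun x : ℝ × ℝ => f x.1 * h x.2) 2 (m.prod k) = eLpNorm f 2 m * eLpNorm h 2 k := by
  simp only [eLpNorm_eq_lintegral_rpow_enorm_toReal (two_ne_zero) (ENNReal.ofNat_ne_top)]
  rw [← ENNReal.mul_rpow_of_nonneg _ _ (by simp)]
  congr 1
  rw [← lintegral_prod_mul (by fun_prop) (by fun_prop)]
  congr 1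
  ext x
  rw [enorm_mul, ENNReal.mul_rpow_of_nonneg _ _ (by simp)]

theorem aux_deriv2_cont (f : ℝ → ℂ) (hf : ContDiff ℝ (⊤ : ℕ∞) f) :
    Continuous (deriv (deriv f)) := by
  have := hf.continuous_iteratedDeriv 2 (WithTop.coe_le_coe.2 (le_top : (2 : ℕ∞) ≤ ⊤))
  simpa [iteratedDeriv_succ] using this

/-- Gluing boundary Weyl sequences: if `(p_n)`, `(q_n)` are
normalized sequences in `C_c^∞((0,∞),ℂ)` whose supports escape to infinity, with
`‖θ'·p_n''‖ → 0` and `‖−θ'·q_n'' + (μ−λ)q_n‖ → 0` in `L²((0,∞))`, then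
`g_n(u₁,u₂) := p_n(u₁)q_n(u₂)` is normalized in `L²((0,∞)²)`, its support is
eventually disjoint from `[0,T]×(0,∞)` for every `T > 0`, and
`‖−θ'∂²_{u₁}g_n − θ'∂²_{u₂}g_n + (μ−λ)g_n‖_{L²((0,∞)²)} → 0`. -/
theorem stmt_10
    (θ' μ lam : ℂ)
    (p q : ℕ → ℝ → ℂ)
    (hp : ∀ n, ContDiff ℝ (⊤ : ℕ∞) (p n) ∧ HasCompactSupport (p n) ∧ tsupport (p n) ⊆ Ioi 0)
    (hq : ∀ n, ContDiff ℝ (⊤ : ℕ∞) (q n) ∧ HasCompactSupport (q n) ∧ tsupport (q n) ⊆ Ioi 0)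
    (hpnorm : ∀ n, eLpNorm (p n) 2 ((volume : Measure ℝ).restrict (Ioi 0)) = 1)
    (hqnorm : ∀ n, eLpNorm (q n) 2 ((volume : Measure ℝ).restrict (Ioi 0)) = 1)
    (hsupp : ∀ T : ℝ, 0 < T → ∃ N : ℕ, ∀ n > N,
      Disjoint (Function.support (p n)) (Ioc 0 T) ∧
      Disjoint (Function.support (q n)) (Ioc 0 T))
    (hp'' : Tendsto
      (fun n => eLpNorm (fun u => θ' * deriv (deriv (p n)) u) 2
        ((volume : Measure ℝ).restrict (Ioi 0))) atTop (nhds 0))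
    (hq'' : Tendsto
      (fun n => eLpNorm (fun u => -θ' * deriv (deriv (q n)) u + (μ - lam) * q n u) 2
        ((volume : Measure ℝ).restrict (Ioi 0))) atTop (nhds 0))
    (g : ℕ → ℝ × ℝ → ℂ)
    (hg : ∀ n x, g n x = p n x.1 * q n x.2) :
    (∀ n, eLpNorm (g n) 2
        ((volume : Measure (ℝ × ℝ)).restrict (Ioi 0 ×ˢ Ioi 0)) = 1) ∧
    (∀ T : ℝ, 0 < T → ∃ N : ℕ, ∀ n > N,
      Disjoint (Function.support (g n)) (Icc 0 T ×ˢ Ioi 0)) ∧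
    Tendsto (fun n => eLpNorm
        (fun x : ℝ × ℝ =>
          -θ' * deriv (deriv (fun t => g n (t, x.2))) x.1
          - θ' * deriv (deriv (fun t => g n (x.1, t))) x.2
          + (μ - lam) * g n x) 2
        ((volume : Measure (ℝ × ℝ)).restrict (Ioi 0 ×ˢ Ioi 0))) atTop (nhds 0) := by
  have hm : ((volume : Measure (ℝ × ℝ)).restrict (Ioi 0 ×ˢ Ioi 0)) =
      ((volume : Measure ℝ).restrict (Ioi 0)).prod ((volume : Measure ℝ).restrict (Ioi 0)) := by
    rw [Measure.prod_restrict]; rfl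
  have hpc : ∀ n, Continuous (p n) := fun n => (hp n).1.continuous
  have hqc : ∀ n, Continuous (q n) := fun n => (hq n).1.continuous
  have hpc2 : ∀ n, Continuous (deriv (deriv (p n))) := fun n => aux_deriv2_cont _ (hp n).1
  have hqc2 : ∀ n, Continuous (deriv (deriv (q n))) := fun n => aux_deriv2_cont _ (hq n).1
  refine ⟨fun n => ?_, fun T hT => ?_, ?_⟩
  · rw [hm, show g n = fun x => p n x.1 * q n x.2 from funext (hg n),
      aux_eLpNorm_prod _ _ (hpc n) (hqc n), hpnorm, hqnorm, one_mul]
  · obtain ⟨N, hN⟩ := hsupp T hT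
    refine ⟨N, fun n hn => ?_⟩
    rw [Set.disjoint_left]
    rintro ⟨a, b⟩ hab ⟨⟨ha0, haT⟩, -⟩
    rw [Function.mem_support, hg] at hab
    have hpa : a ∈ Function.support (p n) := left_ne_zero_of_mul hab
    have hpos : 0 < a := (hp n).2.2 (subset_tsupport _ hpa)
    exact Set.disjoint_left.1 (hN n hn).1 hpa ⟨hpos, haT⟩
  · have key : ∀ n, (fun x : ℝ × ℝ =>
          -θ' * deriv (deriv (fun t => g n (t, x.2))) x.1
          - θ' * deriv (deriv (fun t => g n (x.1, t))) x.2
          + (μ - lam) * g n x) =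
        (fun x : ℝ × ℝ => p n x.1 * (-θ' * deriv (deriv (q n)) x.2 + (μ - lam) * q n x.2)) -
        (fun x : ℝ × ℝ => (θ' * deriv (deriv (p n)) x.1) * q n x.2) := by
      intro n
      ext x
      have e1 : deriv (fun t => g n (t, x.2)) = fun t => deriv (p n) t * q n x.2 := by
        ext t
        simp only [hg]
        exact deriv_mul_const_field _
      have e2 : deriv (fun t => g n (x.1, t)) = fun t => p n x.1 * deriv (q n) t := by
        ext t
        simp only [hg]
        exact deriv_const_mul_field _
      rw [e1, e2, deriv_mul_const_field, deriv_const_mul_field]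
      simp only [Pi.sub_apply, hg]
      ring
    have hsum := hq''.add hp''
    rw [add_zero] at hsum
    refine tendsto_of_tendsto_of_tendsto_of_le_of_le tendsto_const_nhds hsum
      (fun _ => zero_le) (fun n => ?_)
    have c1 := hpc n
    have c2 := hqc n
    have c3 := hpc2 n
    have c4 := hqc2 n
    dsimp only
    rw [key, hm]
    refine (eLpNorm_sub_le (Continuous.aestronglyMeasurable (by fun_prop))
      (Continuous.aestronglyMeasurable (by fun_prop)) (by norm_num)).trans ?_
    rw [aux_eLpNorm_prod (p n) (fun u => -θ' * deriv (deriv (q n)) u + (μ - lam) * q n u)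
      c1 (by fun_prop),
      aux_eLpNorm_prod (fun u => θ' * deriv (deriv (p n)) u) (q n) (by fun_prop) c2,
      hpnorm, hqnorm, one_mul, mul_one]
end

section
/- The linear span of the family of functions u ↦ u^{−k}, for integers k ≥ 2, is dense in L²((1,∞),ℂ) with respect to Lebesgue measure. -/
open Set MeasureTheory

lemma memLp_aux (k : ℕ) (hk : 2 ≤ k) :
    MemLp (fun u : ℝ => ((u : ℂ))⁻¹ ^ k) 2 ((volume : Measure ℝ).restrict (Ioi 1)) := by
  have hm : Measurable (fun u : ℝ => ((u : ℂ))⁻¹ ^ k) := by fun_prop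
  rw [memLp_two_iff_integrable_sq_norm hm.aestronglyMeasurable]
  have h := integrableOn_Ioi_rpow_of_lt (a := -(2 * k : ℝ)) (c := 1)
    (by have : (2 : ℝ) ≤ k := by exact_mod_cast hk
        linarith) one_pos
  refine h.congr_fun (fun u hu => ?_) measurableSet_Ioi
  have hu' : (0 : ℝ) < u := lt_trans one_pos hu
  simp only [norm_pow, norm_inv, Complex.norm_real, Real.norm_eq_abs, abs_of_pos hu']
  rw [Real.rpow_neg hu'.le, ← pow_mul, inv_pow, mul_comm k 2]
  congr 1
  exact_mod_cast Real.rpow_natCast u (2 * k)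

lemma cont_aux (φ : ℝ → ℝ) (hc : Continuous φ) (hs : HasCompactSupport φ) (h0 : φ 0 = 0) :
    Continuous (fun t : ℝ => φ t⁻¹) := by
  rw [continuous_iff_continuousAt]
  intro t
  by_cases ht : t = 0
  · subst ht
    rw [continuousAt_iff_punctured_nhds]
    simp only [inv_zero, h0]
    have := hs.is_zero_at_infty
    exact this.comp (Filter.tendsto_inv₀_nhdsNE_zero.mono_right
      (by rw [← Metric.cobounded_eq_cocompact]))
  · exact hc.continuousAt.comp (continuousAt_inv₀ ht)

lemma zero_aux (G : ℝ → ℂ) (hG : IntegrableOn G (Ioi 1))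
    (h : ∀ n : ℕ, ∫ u in Ioi (1 : ℝ), ((u⁻¹ ^ n : ℝ) : ℂ) * G u = 0) :
    ∀ᵐ u ∂(volume : Measure ℝ).restrict (Ioi 1), G u = 0 := by
  have hint : ∀ ψ : ℝ → ℝ, Continuous ψ →
      IntegrableOn (fun u => ((ψ u⁻¹ : ℝ) : ℂ) * G u) (Ioi 1) := by
    intro ψ hψ
    obtain ⟨C, hC⟩ := (isCompact_Icc (a := (0 : ℝ)) (b := 1)).exists_bound_of_continuousOn
      hψ.continuousOn
    refine Integrable.bdd_mul (c := C) hG ?_ ?_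
    · have : Measurable (fun u : ℝ => ((ψ u⁻¹ : ℝ) : ℂ)) :=
        Complex.measurable_ofReal.comp (hψ.measurable.comp measurable_inv)
      exact this.aestronglyMeasurable
    · filter_upwards [ae_restrict_mem measurableSet_Ioi] with u hu
      rw [Complex.norm_real]
      have hu' : (1 : ℝ) < u := hu
      exact hC _ ⟨by positivity, inv_le_one_of_one_le₀ hu'.le⟩
  have hp : ∀ p : Polynomial ℝ, ∫ u in Ioi (1 : ℝ), ((p.eval u⁻¹ : ℝ) : ℂ) * G u = 0 := by
    intro p
    induction p using Polynomial.induction_on' with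
    | add p q hp hq =>
      simp only [Polynomial.eval_add, Complex.ofReal_add, add_mul]
      rw [integral_add (hint _ p.continuous) (hint _ q.continuous), hp, hq, add_zero]
    | monomial n a =>
      simp only [Polynomial.eval_monomial, Complex.ofReal_mul, mul_assoc]
      rw [integral_const_mul, h n, mul_zero]
  rw [ae_restrict_iff' measurableSet_Ioi]
  refine isOpen_Ioi.ae_eq_zero_of_integral_contDiff_smul_eq_zero hG.locallyIntegrableOn ?_
  intro φ hφ hcs hsub
  have hz : ∀ u, u ∉ Ioi (1 : ℝ) → φ u = 0 := fun u hu =>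
    image_eq_zero_of_notMem_tsupport (fun h => hu (hsub h))
  have hψ := cont_aux φ hφ.continuous hcs (hz 0 (by simp))
  have e1 : ∫ u, φ u • G u = ∫ u in Ioi (1 : ℝ), φ u • G u :=
    (setIntegral_eq_integral_of_forall_compl_eq_zero (fun u hu => by rw [hz u hu, zero_smul])).symm
  rw [e1, ← norm_le_zero_iff]
  refine le_of_forall_pos_le_add fun ε hε => ?_
  rw [zero_add]
  set C := ∫ u in Ioi (1 : ℝ), ‖G u‖ with hC
  have hC0 : 0 ≤ C := integral_nonneg fun _ => norm_nonneg _
  obtain ⟨p, hpp⟩ := exists_polynomial_near_of_continuousOn 0 1 _ hψ.continuousOn (ε / (C + 1))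
    (by positivity)
  have e2 : ∫ u in Ioi (1 : ℝ), φ u • G u
      = ∫ u in Ioi (1 : ℝ), (((φ u⁻¹⁻¹ : ℝ) : ℂ) * G u - ((p.eval u⁻¹ : ℝ) : ℂ) * G u) := by
    rw [integral_sub (hint _ hψ) (hint _ p.continuous), hp, sub_zero]
    simp
  rw [e2]
  calc _ ≤ ∫ u in Ioi (1 : ℝ), (ε / (C + 1)) * ‖G u‖ := by
        refine norm_integral_le_of_norm_le (hG.norm.const_mul _) ?_
        filter_upwards [ae_restrict_mem measurableSet_Ioi] with u hu
        have hu' : (1 : ℝ) < u := hu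
        rw [← sub_mul, norm_mul, ← Complex.ofReal_sub, Complex.norm_real, Real.norm_eq_abs,
          abs_sub_comm]
        gcongr
        exact (hpp _ ⟨by positivity, inv_le_one_of_one_le₀ hu'.le⟩).le
    _ = ε / (C + 1) * C := by rw [integral_const_mul]
    _ ≤ ε := by
        rw [div_mul_eq_mul_div, div_le_iff₀ (by positivity)]
        nlinarith

/-- The linear span of the functions `u ↦ u^{−k}`, for integers
`k ≥ 2`, is dense in `L²((1,∞),ℂ)` with respect to Lebesgue measure. -/
theorem stmt_13 :
    (Submodule.span ℂ
      {g : Lp ℂ 2 ((volume : Measure ℝ).restrict (Ioi 1)) |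
        ∃ k : ℕ, 2 ≤ k ∧
          (g : ℝ → ℂ) =ᵐ[(volume : Measure ℝ).restrict (Ioi 1)]
            fun u : ℝ => ((u : ℂ))⁻¹ ^ k}).topologicalClosure = ⊤ := by
  rw [Submodule.topologicalClosure_eq_top_iff, Submodule.eq_bot_iff]
  intro f hf
  rw [Submodule.mem_orthogonal] at hf
  have hk : ∀ k : ℕ, 2 ≤ k → ∫ u in Ioi (1 : ℝ), ((u : ℂ))⁻¹ ^ k * f u = 0 := by
    intro k hk
    have h := hf ((memLp_aux k hk).toLp _)
      (Submodule.subset_span ⟨k, hk, (memLp_aux k hk).coeFn_toLp⟩)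
    rw [L2.inner_def] at h
    rw [← h]
    refine integral_congr_ae ?_
    filter_upwards [(memLp_aux k hk).coeFn_toLp] with u hu
    rw [hu]
    simp [RCLike.inner_apply, mul_comm]
  have hG : IntegrableOn (fun u : ℝ => ((u : ℂ))⁻¹ ^ 2 * f u) (Ioi 1) :=
    (memLp_aux 2 le_rfl).integrable_mul (Lp.memLp f)
  have := zero_aux _ hG (fun n => by
    rw [← hk (n + 2) (by omega)]
    refine integral_congr_ae (Filter.Eventually.of_forall fun u => ?_)
    push_cast
    ring)
  rw [Lp.eq_zero_iff_ae_eq_zero]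
  filter_upwards [this, ae_restrict_mem measurableSet_Ioi] with u hu hu1
  have hu' : u ≠ 0 := (lt_trans one_pos (show (1 : ℝ) < u from hu1)).ne'
  simpa [hu'] using hu
end

section
/- For real θ > 0 define U_θ^{(2)} on L²((0,∞)²,ℂ) by (U_θ^{(2)}f)(u₁,u₂) := f(ψ_θ(u₁),ψ_θ(u₂))·(ψ_θ'(u₁)·ψ_θ'(u₂))^{1/2}. Then U_θ^{(2)} is a unitary operator, and for every f ∈ C_c^∞((0,∞)²,ℂ) and all (u₁,u₂): U_θ^{(2)}( −Δ((U_θ^{(2)})^{-1}f) )(u₁,u₂) = Σ_{i=1,2} [ a_2(θ,u_i)·∂²_{u_i}f + a_1(θ,u_i)·∂_{u_i}f + a_0(θ,u_i)·f ](u₁,u₂), where Δ = ∂²_{u₁} + ∂²_{u₂}. In particular this equals −θ'·Δf(u₁,u₂) when u₁, u₂ > R, and equals −Δf(u₁,u₂) when u₁, u₂ < K. -/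
open Set MeasureTheory

lemma aux_second (ψ α : ℝ → ℝ) (hψs : ContDiff ℝ (⊤ : ℕ∞) ψ) (hp : ∀ u, 0 < deriv ψ u)
    (hαd : ∀ t, 0 < t → HasDerivAt α (1 / deriv ψ (α t)) t)
    (F : ℝ → ℂ) (hF : ContDiff ℝ (⊤ : ℕ∞) F) (c : ℝ) (hc : 0 < c) (t : ℝ) (ht : 0 < t)
    (u : ℝ) (hu : α t = u) :
    -(deriv (deriv (fun t => F (α t) * (((Real.sqrt (deriv ψ (α t) * c))⁻¹ : ℝ) : ℂ))) t)
      * ((Real.sqrt (deriv ψ u * c) : ℝ) : ℂ)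
    = ((-(1 / (deriv ψ u) ^ 2) : ℝ) : ℂ) * deriv (deriv F) u
      + ((2 * deriv (deriv ψ) u / (deriv ψ u) ^ 3 : ℝ) : ℂ) * deriv F u
      + (((1 / 2) * deriv (deriv (deriv ψ)) u / (deriv ψ u) ^ 3
      - (5 / 4) * (deriv (deriv ψ) u) ^ 2 / (deriv ψ u) ^ 4 : ℝ) : ℂ) * F u := by
  have hψ1 : ContDiff ℝ (⊤ : ℕ∞) (deriv ψ) := (contDiff_infty_iff_deriv.1 hψs).2
  have hψ2 : ContDiff ℝ (⊤ : ℕ∞) (deriv (deriv ψ)) := (contDiff_infty_iff_deriv.1 hψ1).2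
  have hF1 : ContDiff ℝ (⊤ : ℕ∞) (deriv F) := (contDiff_infty_iff_deriv.1 hF).2
  have dF : ∀ u, HasDerivAt F (deriv F u) u := fun u =>
    ((contDiff_infty_iff_deriv.1 hF).1 u).hasDerivAt
  have dF1 : ∀ u, HasDerivAt (deriv F) (deriv (deriv F) u) u := fun u =>
    ((contDiff_infty_iff_deriv.1 hF1).1 u).hasDerivAt
  generalize hP : deriv ψ = p at *
  generalize hP1 : deriv p = p1 at *
  generalize hP2 : deriv p1 = p2 at *
  have dp : ∀ u, HasDerivAt p (p1 u) u := fun u => by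
    rw [← hP1]; exact ((contDiff_infty_iff_deriv.1 hψ1).1 u).hasDerivAt
  have dp1 : ∀ u, HasDerivAt p1 (p2 u) u := fun u => by
    rw [← hP2]; exact ((contDiff_infty_iff_deriv.1 hψ2).1 u).hasDerivAt
  set r : ℝ → ℝ := fun u => (Real.sqrt (p u * c))⁻¹ with hr
  have dr : ∀ u, HasDerivAt r (-(r u * p1 u / (2 * p u))) u := fun u => by
    have h0 : 0 < p u * c := mul_pos (hp u) hc
    have hs : 0 < Real.sqrt (p u * c) := Real.sqrt_pos.2 h0
    have := (((dp u).mul_const c).sqrt h0.ne').inv hs.ne'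
    refine this.congr_deriv ?_
    have h2 : Real.sqrt (p u * c) ^ 2 = p u * c := Real.sq_sqrt h0.le
    have := (hp u).ne'
    rw [h2]
    change _ = -((Real.sqrt (p u * c))⁻¹ * p1 u / (2 * p u))
    field_simp
  have dq1 : ∀ u, HasDerivAt (fun u => r u / p u) (-(3 / 2 * r u * p1 u / p u ^ 2)) u := fun u => by
    have := (hp u).ne'
    refine ((dr u).div (dp u) this).congr_deriv ?_
    field_simp; ring
  have dq2 : ∀ u, HasDerivAt (fun u => r u * p1 u / (2 * p u ^ 2))
      (r u * (p2 u / (2 * p u ^ 2) - 5 / 4 * p1 u ^ 2 / p u ^ 3)) u := fun u => by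
    have := (hp u).ne'
    refine (((dr u).mul (dp1 u)).div (((dp u).pow 2).const_mul 2) (by simpa using this)).congr_deriv ?_
    simp; field_simp; ring
  have dg : ∀ t, 0 < t → HasDerivAt (fun t => F (α t) * ((r (α t) : ℝ) : ℂ))
      (deriv F (α t) * ((r (α t) / p (α t) : ℝ) : ℂ)
        - F (α t) * ((r (α t) * p1 (α t) / (2 * p (α t) ^ 2) : ℝ) : ℂ)) t := fun t ht => by
    have := (hp (α t)).ne'
    have hG := (dF (α t)).mul (dr (α t)).ofReal_comp
    refine (HasDerivAt.scomp t hG (hαd t ht)).congr_deriv ?_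
    have : (p (α t) : ℂ) ≠ 0 := by exact_mod_cast this
    simp only [Complex.real_smul]; push_cast
    field_simp; ring
  have e1 : deriv (fun t => F (α t) * ((r (α t) : ℝ) : ℂ)) =ᶠ[nhds t] fun t =>
      (deriv F (α t) * ((r (α t) / p (α t) : ℝ) : ℂ)
        - F (α t) * ((r (α t) * p1 (α t) / (2 * p (α t) ^ 2) : ℝ) : ℂ)) := by
    filter_upwards [Ioi_mem_nhds ht] with s hs using (dg s hs).deriv
  have hG := ((dF1 (α t)).mul (dq1 (α t)).ofReal_comp).sub ((dF (α t)).mul (dq2 (α t)).ofReal_comp)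
  have h2 := (HasDerivAt.scomp t hG (hαd t ht)).deriv
  rw [e1.deriv_eq]
  have h3 : deriv (fun t =>
      (deriv F (α t) * ((r (α t) / p (α t) : ℝ) : ℂ)
        - F (α t) * ((r (α t) * p1 (α t) / (2 * p (α t) ^ 2) : ℝ) : ℂ))) t = _ := h2
  rw [h3, hu]
  have hs : 0 < Real.sqrt (p u * c) := Real.sqrt_pos.2 (mul_pos (hp u) hc)
  have hs' : ((Real.sqrt (p u * c) : ℝ) : ℂ) ≠ 0 := by exact_mod_cast hs.ne'
  have hp' : (p u : ℂ) ≠ 0 := by exact_mod_cast (hp u).ne'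
  simp only [Complex.real_smul, hr]; push_cast
  field_simp; ring

lemma aux_unitary {X : Type*} [MeasurableSpace X] (μ : Measure X) (e : X ≃ᵐ X) (w : X → ℝ)
    (hw : Measurable w) (hpos : ∀ x, 0 < w x)
    (hmap : (μ.withDensity (fun x => ENNReal.ofReal (w x))).map e = μ) :
    ∃ U : Lp ℂ 2 μ ≃ₗᵢ[ℂ] Lp ℂ 2 μ, ∀ f : Lp ℂ 2 μ,
      (U f : X → ℂ) =ᵐ[μ] fun x => f (e x) * ((Real.sqrt (w x) : ℝ) : ℂ) := by
  set ν := μ.withDensity (fun x => ENNReal.ofReal (w x)) with hν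
  have hwm : Measurable (fun x => ENNReal.ofReal (w x)) := hw.ennreal_ofReal
  have hac : μ ≪ ν := withDensity_absolutelyContinuous' hwm.aemeasurable
    (Filter.Eventually.of_forall fun x => by simpa using hpos x)
  have hac' : ν ≪ μ := withDensity_absolutelyContinuous _ _
  have hq : Measure.QuasiMeasurePreserving e μ μ :=
    ⟨e.measurable, by
      conv_rhs => rw [← hmap]
      exact hac.map e.measurable⟩
  have hqs : Measure.QuasiMeasurePreserving e.symm μ μ :=
    ⟨e.symm.measurable, by
      conv_lhs => rw [← hmap]
      rw [Measure.map_map e.symm.measurable e.measurable]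
      simpa using hac'⟩
  have hnorm : ∀ f : X → ℂ, eLpNorm (fun x => f (e x) * ((Real.sqrt (w x) : ℝ) : ℂ)) 2 μ
      = eLpNorm f 2 μ := by
    intro f
    rw [eLpNorm_eq_lintegral_rpow_enorm_toReal (by simp) (by simp),
      eLpNorm_eq_lintegral_rpow_enorm_toReal (by simp) (by simp)]
    congr 1
    conv_rhs => rw [← hmap]
    rw [lintegral_map_equiv, hν, lintegral_withDensity_eq_lintegral_mul_non_measurable _ hwm
      (Filter.Eventually.of_forall fun x => by simp)]
    refine lintegral_congr fun x => ?_
    simp only [Pi.mul_apply, enorm_mul]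
    rw [ENNReal.mul_rpow_of_nonneg _ _ (by simp), mul_comm]
    congr 1
    rw [← ofReal_norm, Complex.norm_real, Real.norm_of_nonneg (Real.sqrt_nonneg _)]
    rw [ENNReal.toReal_ofNat, ENNReal.rpow_ofNat, ← ENNReal.ofReal_pow (Real.sqrt_nonneg _),
      Real.sq_sqrt (hpos x).le]
  have hsm : Measurable (fun x => ((Real.sqrt (w x) : ℝ) : ℂ)) := by fun_prop
  have hmem : ∀ f : Lp ℂ 2 μ, MemLp (fun x => f (e x) * ((Real.sqrt (w x) : ℝ) : ℂ)) 2 μ := by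
    intro f
    refine ⟨?_, ?_⟩
    · exact ((Lp.aestronglyMeasurable f).comp_quasiMeasurePreserving hq).mul
        hsm.aestronglyMeasurable
    · rw [hnorm]; exact Lp.eLpNorm_lt_top f
  let A : Lp ℂ 2 μ →ₗᵢ[ℂ] Lp ℂ 2 μ :=
    { toFun := fun f => (hmem f).toLp
      map_add' := fun f g => by
        refine Lp.ext ?_
        filter_upwards [(hmem (f + g)).coeFn_toLp, (hmem f).coeFn_toLp, (hmem g).coeFn_toLp,
          Lp.coeFn_add (hmem f).toLp (hmem g).toLp, hq.ae (Lp.coeFn_add f g)] with x h1 h2 h3 h4 h5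
        rw [h1, h4, Pi.add_apply, h2, h3, h5, Pi.add_apply]; ring
      map_smul' := fun c f => by
        refine Lp.ext ?_
        filter_upwards [(hmem (c • f)).coeFn_toLp, (hmem f).coeFn_toLp,
          Lp.coeFn_smul c (hmem f).toLp, hq.ae (Lp.coeFn_smul c f)] with x h1 h2 h4 h5
        simp only [RingHom.id_apply]
        rw [h1, h4, Pi.smul_apply, h2, h5, Pi.smul_apply]; simp [mul_assoc]
      norm_map' := fun f => by
        change ‖(hmem f).toLp‖ = _
        rw [Lp.norm_toLp, hnorm, Lp.norm_def] }
  have hA : ∀ f, (A f : X → ℂ) =ᵐ[μ] fun x => f (e x) * ((Real.sqrt (w x) : ℝ) : ℂ) :=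
    fun f => (hmem f).coeFn_toLp
  have hsurj : Function.Surjective A := by
    intro g
    have hne : ∀ x, ((Real.sqrt (w x) : ℝ) : ℂ) ≠ 0 := fun x => by
      exact_mod_cast (Real.sqrt_pos.2 (hpos x)).ne'
    have hh : MemLp (fun y => g (e.symm y) * (((Real.sqrt (w (e.symm y)) : ℝ) : ℂ))⁻¹) 2 μ := by
      refine ⟨?_, ?_⟩
      · exact ((Lp.aestronglyMeasurable g).comp_quasiMeasurePreserving hqs).mul
          (hsm.comp e.symm.measurable).inv.aestronglyMeasurable
      · rw [← hnorm]
        simp only [e.symm_apply_apply]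
        simp only [mul_assoc, inv_mul_cancel₀ (hne _), mul_one]
        exact Lp.eLpNorm_lt_top g
    refine ⟨hh.toLp, Lp.ext ?_⟩
    filter_upwards [hA hh.toLp, hq.ae hh.coeFn_toLp] with x h1 h2
    rw [h1, h2]
    simp [mul_assoc, inv_mul_cancel₀ (hne _)]
  exact ⟨LinearIsometryEquiv.ofSurjective A hsurj, hA⟩

/-- For real `θ > 0` the two-dimensional dilation
`(U_θ⁽²⁾f)(u₁,u₂) = f(ψ_θ(u₁),ψ_θ(u₂))·(ψ_θ'(u₁)ψ_θ'(u₂))^{1/2}` is a unitary operator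
on `L²((0,∞)²,ℂ)`, and for every `f ∈ C_c^∞((0,∞)²,ℂ)` and all `(u₁,u₂)`,
`U_θ⁽²⁾(−Δ((U_θ⁽²⁾)⁻¹f))(u₁,u₂) = Σᵢ [a₂(θ,uᵢ)∂²_{uᵢ}f + a₁(θ,uᵢ)∂_{uᵢ}f + a₀(θ,uᵢ)f](u₁,u₂)`.
In particular this equals `−θ'·Δf` when `u₁,u₂ > R` and `−Δf` when `u₁,u₂ < K`. -/
theorem stmt_14
    (K R : ℝ) (hK : 2 < K) (hKR : K < R)
    (φ : ℝ → ℝ) (hφ : ContDiff ℝ (⊤ : ℕ∞) φ)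
    (hφ0 : ∀ u, 0 ≤ φ u) (hφ1 : ∀ u, φ u ≤ 1)
    (hφ' : ∀ u, 0 ≤ deriv φ u)
    (hφK : ∀ u, u < K → φ u = 0)
    (hφR : ∀ u, R < u → φ u = 1)
    (θ : ℝ) (hθ : 0 < θ)
    (ψ α : ℝ → ℝ)
    (hψ : ∀ u, ψ u = (φ u * θ + 1) * u)
    (hbij : BijOn ψ (Ici (0 : ℝ)) (Ici (0 : ℝ)))
    (hα : InvOn α ψ (Ici (0 : ℝ)) (Ici (0 : ℝ)))
    (lap : (ℝ × ℝ → ℂ) → ℝ × ℝ → ℂ)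
    (hlap : ∀ g : ℝ × ℝ → ℂ, ∀ x : ℝ × ℝ,
      lap g x = deriv (deriv (fun t => g (t, x.2))) x.1
              + deriv (deriv (fun t => g (x.1, t))) x.2)
    (a₂ a₁ a₀ : ℝ → ℝ)
    (ha₂ : ∀ u, a₂ u = -(1 / (deriv ψ u) ^ 2))
    (ha₁ : ∀ u, a₁ u = 2 * deriv (deriv ψ) u / (deriv ψ u) ^ 3)
    (ha₀ : ∀ u, a₀ u = (1 / 2) * deriv (deriv (deriv ψ)) u / (deriv ψ u) ^ 3
      - (5 / 4) * (deriv (deriv ψ) u) ^ 2 / (deriv ψ u) ^ 4) :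
    (∃ U : Lp ℂ 2 ((volume : Measure (ℝ × ℝ)).restrict (Ioi 0 ×ˢ Ioi 0)) ≃ₗᵢ[ℂ]
          Lp ℂ 2 ((volume : Measure (ℝ × ℝ)).restrict (Ioi 0 ×ˢ Ioi 0)),
      ∀ f : Lp ℂ 2 ((volume : Measure (ℝ × ℝ)).restrict (Ioi 0 ×ˢ Ioi 0)),
        (U f : ℝ × ℝ → ℂ) =ᵐ[(volume : Measure (ℝ × ℝ)).restrict (Ioi 0 ×ˢ Ioi 0)]
          fun x : ℝ × ℝ => f (ψ x.1, ψ x.2)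
            * ((Real.sqrt (deriv ψ x.1 * deriv ψ x.2) : ℝ) : ℂ)) ∧
    (∀ f : ℝ × ℝ → ℂ, ContDiff ℝ (⊤ : ℕ∞) f → HasCompactSupport f →
      tsupport f ⊆ Ioi 0 ×ˢ Ioi 0 →
      ∀ x : ℝ × ℝ, 0 < x.1 → 0 < x.2 →
        ((-(lap (fun y : ℝ × ℝ => f (α y.1, α y.2)
              * (((Real.sqrt (deriv ψ (α y.1) * deriv ψ (α y.2)))⁻¹ : ℝ) : ℂ))
            (ψ x.1, ψ x.2)))
          * ((Real.sqrt (deriv ψ x.1 * deriv ψ x.2) : ℝ) : ℂ)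
         = ((a₂ x.1 : ℝ) : ℂ) * deriv (deriv (fun t => f (t, x.2))) x.1
           + ((a₁ x.1 : ℝ) : ℂ) * deriv (fun t => f (t, x.2)) x.1
           + ((a₀ x.1 : ℝ) : ℂ) * f x
           + ((a₂ x.2 : ℝ) : ℂ) * deriv (deriv (fun t => f (x.1, t))) x.2
           + ((a₁ x.2 : ℝ) : ℂ) * deriv (fun t => f (x.1, t)) x.2
           + ((a₀ x.2 : ℝ) : ℂ) * f x) ∧
        (R < x.1 → R < x.2 →
          (-(lap (fun y : ℝ × ℝ => f (α y.1, α y.2)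
                * (((Real.sqrt (deriv ψ (α y.1) * deriv ψ (α y.2)))⁻¹ : ℝ) : ℂ))
              (ψ x.1, ψ x.2)))
            * ((Real.sqrt (deriv ψ x.1 * deriv ψ x.2) : ℝ) : ℂ)
          = -(((1 / (θ + 1) ^ 2 : ℝ) : ℂ) * lap f x)) ∧
        (x.1 < K → x.2 < K →
          (-(lap (fun y : ℝ × ℝ => f (α y.1, α y.2)
                * (((Real.sqrt (deriv ψ (α y.1) * deriv ψ (α y.2)))⁻¹ : ℝ) : ℂ))
              (ψ x.1, ψ x.2)))
            * ((Real.sqrt (deriv ψ x.1 * deriv ψ x.2) : ℝ) : ℂ)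
          = -(lap f x))) := by
  have hψe : ψ = fun u => (φ u * θ + 1) * u := funext hψ
  have hψs : ContDiff ℝ (⊤ : ℕ∞) ψ := by rw [hψe]; fun_prop
  have hψd : ∀ u, HasDerivAt ψ (deriv ψ u) u := fun u =>
    ((contDiff_infty_iff_deriv.1 hψs).1 u).hasDerivAt
  have hψ1 : ContDiff ℝ (⊤ : ℕ∞) (deriv ψ) := (contDiff_infty_iff_deriv.1 hψs).2
  have hlt : ∀ u, u < K → ψ =ᶠ[nhds u] fun u => (1 : ℝ) * u := fun u hu => by
    filter_upwards [Iio_mem_nhds hu] with s hs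
    rw [hψ, hφK s hs]; ring
  have hgt : ∀ u, R < u → ψ =ᶠ[nhds u] fun u => (θ + 1) * u := fun u hu => by
    filter_upwards [Ioi_mem_nhds hu] with s hs
    rw [hψ, hφR s hs]; ring
  have hlin : ∀ (c u : ℝ), (ψ =ᶠ[nhds u] fun u => c * u) →
      deriv ψ u = c ∧ deriv (deriv ψ) u = 0 ∧ deriv (deriv (deriv ψ)) u = 0 := by
    intro c u h
    have e0 : deriv (fun u : ℝ => c * u) = fun _ => c := by
      funext v; simpa using ((hasDerivAt_id v).const_mul c).deriv
    have e1 : deriv ψ =ᶠ[nhds u] fun _ => c := by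
      have := h.deriv
      rwa [e0] at this
    have e2 : deriv (deriv ψ) =ᶠ[nhds u] fun _ => 0 := by
      have := e1.deriv
      simpa using this
    have e3 : deriv (deriv (deriv ψ)) =ᶠ[nhds u] fun _ => 0 := by
      have := e2.deriv
      simpa using this
    exact ⟨e1.eq_of_nhds, e2.eq_of_nhds, e3.eq_of_nhds⟩
  have hp : ∀ u, 0 < deriv ψ u := by
    intro u
    rcases lt_or_ge u K with hu | hu
    · rw [(hlin 1 u (hlt u hu)).1]; exact one_pos
    · have hd : HasDerivAt φ (deriv φ u) u := ((contDiff_infty_iff_deriv.1 hφ).1 u).hasDerivAt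
      have h1 : deriv ψ u = (deriv φ u * θ) * u + (φ u * θ + 1) * 1 := by
        rw [hψe]
        exact (((hd.mul_const θ).add_const 1).mul (hasDerivAt_id u)).deriv
      rw [h1]
      have hu0 : 0 ≤ u := by linarith
      have := mul_nonneg (mul_nonneg (hφ' u) hθ.le) hu0
      have := mul_nonneg (hφ0 u) hθ.le
      linarith
  have hmono : StrictMono ψ := strictMono_of_deriv_pos hp
  have hψ0 : ψ 0 = 0 := by rw [hψ]; ring
  have hψpos : ∀ u, 0 < u → 0 < ψ u := fun u hu => by
    have := hmono hu
    rwa [hψ0] at this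
  have hsurj : Function.Surjective ψ := by
    intro y
    rcases lt_or_ge y 0 with hy | hy
    · exact ⟨y, by rw [hψ, hφK y (by linarith)]; ring⟩
    · obtain ⟨x, _, hx⟩ := hbij.surjOn hy
      exact ⟨x, hx⟩
  let h : ℝ ≃ₜ ℝ := (hmono.orderIsoOfSurjective ψ hsurj).toHomeomorph
  have hh : ∀ u, h u = ψ u := fun u => rfl
  have hαh : ∀ t, 0 ≤ t → α t = h.symm t := fun t ht => by
    apply h.injective
    rw [h.apply_symm_apply, hh]
    exact hα.2 ht
  have hαψ : ∀ u, 0 < u → α (ψ u) = u := fun u hu => hα.1 (le_of_lt hu : (0 : ℝ) ≤ u)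
  have hαd : ∀ t, 0 < t → HasDerivAt α (1 / deriv ψ (α t)) t := by
    intro t ht
    rw [one_div]
    have hev : α =ᶠ[nhds t] h.symm := by
      filter_upwards [Ioi_mem_nhds ht] with s hs using hαh s (le_of_lt hs)
    refine HasDerivAt.of_local_left_inverse
      (h.symm.continuous.continuousAt.congr hev.symm) (hψd _) (hp _).ne' ?_
    filter_upwards [Ioi_mem_nhds ht] with s hs using hα.2 (le_of_lt hs : (0 : ℝ) ≤ s)
  refine ⟨?_, ?_⟩
  · let e : (ℝ × ℝ) ≃ᵐ (ℝ × ℝ) := h.toMeasurableEquiv.prodCongr h.toMeasurableEquiv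
    have he : ∀ x : ℝ × ℝ, e x = (ψ x.1, ψ x.2) := fun x => rfl
    have hdc : Measurable (deriv ψ) := hψ1.continuous.measurable
    refine aux_unitary _ e (fun x => deriv ψ x.1 * deriv ψ x.2) (by fun_prop)
      (fun x => mul_pos (hp _) (hp _)) ?_
    have hs : MeasurableSet (Ioi (0 : ℝ) ×ˢ Ioi (0 : ℝ)) := measurableSet_Ioi.prod measurableSet_Ioi
    have key := map_withDensity_abs_det_fderiv_eq_addHaar (volume : Measure (ℝ × ℝ))
      (f := Prod.map ψ ψ) (s := Ioi (0 : ℝ) ×ˢ Ioi (0 : ℝ))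
      (f' := fun x => ((ContinuousLinearMap.toSpanSingleton ℝ (deriv ψ x.1)).prodMap
        (ContinuousLinearMap.toSpanSingleton ℝ (deriv ψ x.2)))) hs.nullMeasurableSet
      (fun x _ => ((hψd x.1).hasFDerivAt.prodMap x (hψd x.2).hasFDerivAt).hasFDerivWithinAt)
      (hmono.injective.prodMap hmono.injective).injOn
    have himg : ψ '' Ioi 0 = Ioi 0 := by
      ext y; constructor
      · rintro ⟨x, hx, rfl⟩; exact hψpos x hx
      · intro hy
        obtain ⟨x, rfl⟩ := hsurj y
        refine ⟨x, ?_, rfl⟩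
        have : ψ 0 < ψ x := by rw [hψ0]; exact hy
        exact hmono.lt_iff_lt.1 this
    rw [prodMap_image_prod, himg] at key
    have hdet : ∀ x : ℝ × ℝ, |((ContinuousLinearMap.toSpanSingleton ℝ (deriv ψ x.1)).prodMap
        (ContinuousLinearMap.toSpanSingleton ℝ (deriv ψ x.2))).det|
        = deriv ψ x.1 * deriv ψ x.2 := by
      intro x
      rw [ContinuousLinearMap.det, ContinuousLinearMap.coe_prodMap, LinearMap.det_prodMap]
      have := fun a : ℝ => ContinuousLinearMap.det_toSpanSingleton (𝕜 := ℝ) a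
      simp only [ContinuousLinearMap.det] at this
      rw [this, this, abs_of_pos (mul_pos (hp _) (hp _))]
    simp only [hdet] at key
    exact key
  · intro f hf _ _ x hx1 hx2
    have main : (-(lap (fun y : ℝ × ℝ => f (α y.1, α y.2)
              * (((Real.sqrt (deriv ψ (α y.1) * deriv ψ (α y.2)))⁻¹ : ℝ) : ℂ))
            (ψ x.1, ψ x.2)))
          * ((Real.sqrt (deriv ψ x.1 * deriv ψ x.2) : ℝ) : ℂ)
         = ((a₂ x.1 : ℝ) : ℂ) * deriv (deriv (fun t => f (t, x.2))) x.1
           + ((a₁ x.1 : ℝ) : ℂ) * deriv (fun t => f (t, x.2)) x.1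
           + ((a₀ x.1 : ℝ) : ℂ) * f x
           + ((a₂ x.2 : ℝ) : ℂ) * deriv (deriv (fun t => f (x.1, t))) x.2
           + ((a₁ x.2 : ℝ) : ℂ) * deriv (fun t => f (x.1, t)) x.2
           + ((a₀ x.2 : ℝ) : ℂ) * f x := by
      have A := aux_second ψ α hψs hp hαd (fun t => f (t, x.2)) (by fun_prop) (deriv ψ x.2) (hp _)
        (ψ x.1) (hψpos _ hx1) x.1 (hαψ _ hx1)
      have B := aux_second ψ α hψs hp hαd (fun t => f (x.1, t)) (by fun_prop) (deriv ψ x.1) (hp _)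
        (ψ x.2) (hψpos _ hx2) x.2 (hαψ _ hx2)
      simp only [mul_comm _ (deriv ψ x.1)] at B
      rw [← ha₂, ← ha₁, ← ha₀] at A B
      rw [hlap]
      simp only [hαψ _ hx1, hαψ _ hx2]
      rw [neg_add, add_mul, A, B]
      ring
    refine ⟨main, fun h1 h2 => ?_, fun h1 h2 => ?_⟩
    · obtain ⟨p1, p2, p3⟩ := hlin _ _ (hgt _ h1)
      obtain ⟨q1, q2, q3⟩ := hlin _ _ (hgt _ h2)
      rw [main, hlap]
      simp only [ha₂, ha₁, ha₀, p1, p2, p3, q1, q2, q3]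
      push_cast
      ring
    · obtain ⟨p1, p2, p3⟩ := hlin _ _ (hlt _ h1)
      obtain ⟨q1, q2, q3⟩ := hlin _ _ (hlt _ h2)
      rw [main, hlap]
      simp only [ha₂, ha₁, ha₀, p1, p2, p3, q1, q2, q3]
      push_cast
      ring
end
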